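/- Let n ≥ 3 and let Ψ be an automorphism of the left-ideal relation digraph of M_n(F_q). Then there exists an invertible matrix P ∈ M_n(F_q) such that [Ψ(E_{e_1})·P] = [E_{e_1}]. -/

import Mathlib

/-- The left ideal of `M_n(F)` generated by `X`: the set of all `C * X`. -/
def leftIdeal {n : ℕ} {F : Type*} [Field F]
    (X : Matrix (Fin n) (Fin n) F) : Set (Matrix (Fin n) (Fin n) F) :=
  {A | ∃ C : Matrix (Fin n) (Fin n) F, A = C * X}

/-- `Ee k` is the matrix whose first row is the `k`-th standard basis vector of
`F^n` and whose other rows are zero. -/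
def Ee {n : ℕ} (F : Type*) [Field F] (k : Fin n) : Matrix (Fin n) (Fin n) F :=
  Matrix.of fun i j => if (i : ℕ) = 0 ∧ j = k then 1 else 0

/-!
The left ideal `[X]` consists of the matrices whose row space lies in the row space of `X`, so the
edge relation is strict inclusion of row spaces. A subspace `W` of `F^n` sits in a chain of
subspaces `⊥ < ⋯ < W < ⋯ < ⊤` of the maximal possible length `n`; a map preserving strict inclusions
cannot shorten the part below `W` or the part above it, so it preserves `dim W`. Finally, `GL_n(F)`
acts transitively on the subspaces of a given dimension.
-/

section StrictMono

variable {R M α : Type*} [Ring R] [AddCommGroup M] [Module R M] [IsArtinian R M] [IsNoetherian R M]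

theorem length_eq_of_strictMono {f : Submodule R M → Submodule R M} (hf : StrictMono f)
    (N : Submodule R M) : Module.length R (f N) = Module.length R N := by
  have length_add (K : Submodule R M) :
      Module.length R K + Module.length R (M ⧸ K) = Module.length R M :=
    (Module.length_eq_add_of_exact K.subtype K.mkQ K.subtype_injective K.mkQ_surjective
      (LinearMap.exact_subtype_mkQ K)).symm
  have below : Module.length R N ≤ Module.length R (f N) := by
    simpa only [Module.length_submodule] using Order.height_le_height_apply_of_strictMono f hf N
  have above : Module.length R (M ⧸ N) ≤ Module.length R (M ⧸ f N) := by
    simpa only [Module.length_quotient] using Order.coheight_le_coheight_apply_of_strictMono f hf N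
  refine le_antisymm ?_ below
  refine (ENat.add_le_add_iff_right (Module.length_ne_top (R := R) (M := M ⧸ N))).mp ?_
  calc Module.length R (f N) + Module.length R (M ⧸ N)
      ≤ Module.length R (f N) + Module.length R (M ⧸ f N) := by gcongr
    _ = Module.length R N + Module.length R (M ⧸ N) := by rw [length_add, length_add]

theorem length_eq_of_lt_imp_lt {r p : α → Submodule R M} (hr : Function.Surjective r)
    (hlt : ∀ a b, r a < r b → p a < p b) (a : α) :
    Module.length R (p a) = Module.length R (r a) := by
  classical
  -- `p` need not factor through `r`, so the section of `r` has to be chosen to pass through `a`.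
  obtain ⟨s, hs, hsa⟩ : ∃ s, Function.RightInverse s r ∧ s (r a) = a := by
    refine ⟨Function.update (Function.surjInv hr) (r a) a, fun N => ?_, Function.update_self ..⟩
    obtain rfl | hN := eq_or_ne N (r a)
    · rw [Function.update_self]
    · rw [Function.update_of_ne hN, Function.surjInv_eq hr]
  have hmono : StrictMono (p ∘ s) := fun N K hNK => hlt _ _ (by rwa [hs N, hs K])
  have hlength := length_eq_of_strictMono hmono (r a)
  rwa [Function.comp_apply, hsa] at hlength

end StrictMono

section RowSpace

variable {l m n R : Type*} [Fintype l] [Fintype m] [Semiring R]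

/-- The row space of a matrix, encoded as the range of `v ↦ v ᵥ* X`; inclusion of row spaces is what
inclusion of the generated left ideals amounts to. -/
def rowSpace (X : Matrix m n R) : Submodule R (n → R) :=
  LinearMap.range X.vecMulLinear

theorem rowSpace_mul (X : Matrix l m R) (Y : Matrix m n R) :
    rowSpace (X * Y) = (rowSpace X).map Y.vecMulLinear := by
  rw [rowSpace, rowSpace, ← LinearMap.range_comp]
  congr 1
  ext1 v
  simp

theorem exists_eq_mul_iff_rowSpace_le {X : Matrix l n R} {Y : Matrix m n R} :
    (∃ C : Matrix l m R, X = C * Y) ↔ rowSpace X ≤ rowSpace Y := by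
  classical
  constructor
  · rintro ⟨C, rfl⟩
    rw [rowSpace_mul]
    exact LinearMap.map_le_range
  · intro hle
    have row_mem (i : l) : X i ∈ rowSpace Y := hle ⟨Pi.single i 1, by simp [Matrix.row]⟩
    choose C hC using row_mem
    exact ⟨Matrix.of C, funext fun i => (hC i).symm⟩

theorem rowSpace_toMatrixRight' [DecidableEq m] (f : (m → R) →ₗ[R] n → R) :
    rowSpace f.toMatrixRight' = LinearMap.range f :=
  congrArg LinearMap.range (LinearMap.toMatrixRight'.symm_apply_apply f)

theorem isUnit_toMatrixRight' [DecidableEq m] (g : (m → R) ≃ₗ[R] m → R) :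
    IsUnit g.toLinearMap.toMatrixRight' := by
  refine isUnit_iff_exists.mpr ⟨g.symm.toLinearMap.toMatrixRight', ?_, ?_⟩ <;>
    rw [← LinearMap.toMatrixRight'_comp] <;> simp

end RowSpace

section DivisionRing

variable {m K : Type*} [Fintype m] [DivisionRing K]

theorem rowSpace_surjective : Function.Surjective (rowSpace : Matrix m m K → _) := by
  classical
  intro W
  obtain ⟨π, hπ⟩ := W.subtype.exists_leftInverse_of_injective W.ker_subtype
  have hπ_surj : Function.Surjective π := fun w => ⟨w, LinearMap.congr_fun hπ w⟩
  refine ⟨(W.subtype ∘ₗ π).toMatrixRight', ?_⟩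
  rw [rowSpace_toMatrixRight', LinearMap.range_comp_of_range_eq_top _
    (LinearMap.range_eq_top.mpr hπ_surj), Submodule.range_subtype]

theorem exists_linearEquiv_map_eq {V : Type*} [AddCommGroup V] [Module K V] {W W' : Submodule K V}
    [FiniteDimensional K W] [FiniteDimensional K W']
    (h : Module.finrank K W = Module.finrank K W') :
    ∃ g : V ≃ₗ[K] V, W.map g.toLinearMap = W' := by
  let e : W ≃ₗ[K] W' := LinearEquiv.ofFinrankEq W W' h
  obtain ⟨g, hg⟩ := Submodule.exists_linearEquiv_restrict_eq e
  have hcomp : g.toLinearMap ∘ₗ W.subtype = W'.subtype ∘ₗ e.toLinearMap :=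
    LinearMap.ext fun x => (hg x).symm
  refine ⟨g, ?_⟩
  calc W.map g.toLinearMap
      = LinearMap.range (g.toLinearMap ∘ₗ W.subtype) := by
        rw [LinearMap.range_comp, Submodule.range_subtype]
    _ = W' := by rw [hcomp, LinearMap.range_comp_of_range_eq_top _ e.range, Submodule.range_subtype]

theorem exists_isUnit_rowSpace_mul_eq [DecidableEq m] {X Y : Matrix m m K}
    (h : Module.finrank K (rowSpace X) = Module.finrank K (rowSpace Y)) :
    ∃ P : Matrix m m K, IsUnit P ∧ rowSpace (X * P) = rowSpace Y := by
  obtain ⟨g, hg⟩ := exists_linearEquiv_map_eq h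
  refine ⟨g.toLinearMap.toMatrixRight', isUnit_toMatrixRight' g, ?_⟩
  rw [rowSpace_mul, ← hg]
  exact congrArg (Submodule.map · _) (LinearMap.toMatrixRight'.symm_apply_apply g.toLinearMap)

end DivisionRing

section LeftIdeal

variable {n : ℕ} {F : Type*} [Field F]

theorem leftIdeal_subset_iff {X Y : Matrix (Fin n) (Fin n) F} :
    leftIdeal X ⊆ leftIdeal Y ↔ rowSpace X ≤ rowSpace Y := by
  have mem_leftIdeal (A B : Matrix (Fin n) (Fin n) F) :
      A ∈ leftIdeal B ↔ rowSpace A ≤ rowSpace B := exists_eq_mul_iff_rowSpace_le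
  simp only [Set.subset_def, mem_leftIdeal]
  exact ⟨fun h => h X le_rfl, fun hXY A hAX => hAX.trans hXY⟩

theorem leftIdeal_ssubset_iff {X Y : Matrix (Fin n) (Fin n) F} :
    leftIdeal X ⊂ leftIdeal Y ↔ rowSpace X < rowSpace Y := by
  rw [Set.ssubset_def, lt_iff_le_not_ge, leftIdeal_subset_iff, leftIdeal_subset_iff]

theorem leftIdeal_eq_iff {X Y : Matrix (Fin n) (Fin n) F} :
    leftIdeal X = leftIdeal Y ↔ rowSpace X = rowSpace Y := by
  simp only [le_antisymm_iff, leftIdeal_subset_iff]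

theorem finrank_rowSpace_eq_of_ssubset {Ψ : Matrix (Fin n) (Fin n) F → Matrix (Fin n) (Fin n) F}
    (hΨ : ∀ X Y, leftIdeal X ⊂ leftIdeal Y → leftIdeal (Ψ X) ⊂ leftIdeal (Ψ Y))
    (X : Matrix (Fin n) (Fin n) F) :
    Module.finrank F (rowSpace (Ψ X)) = Module.finrank F (rowSpace X) := by
  simp only [leftIdeal_ssubset_iff] at hΨ
  have hlength := length_eq_of_lt_imp_lt (p := fun X => rowSpace (Ψ X)) rowSpace_surjective hΨ X
  simpa only [Module.length_eq_finrank, Nat.cast_inj] using hlength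

theorem stmt_12_general (Ψ : Matrix (Fin n) (Fin n) F → Matrix (Fin n) (Fin n) F)
    (hΨ : ∀ X Y, leftIdeal X ⊂ leftIdeal Y → leftIdeal (Ψ X) ⊂ leftIdeal (Ψ Y))
    (X : Matrix (Fin n) (Fin n) F) :
    ∃ P : Matrix (Fin n) (Fin n) F, IsUnit P ∧ leftIdeal (Ψ X * P) = leftIdeal X := by
  simp only [leftIdeal_eq_iff]
  exact exists_isUnit_rowSpace_mul_eq (finrank_rowSpace_eq_of_ssubset hΨ X)

end LeftIdeal

/-- For any automorphism `Ψ` of the left-ideal relation digraph of `M_n(F_q)`,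
`n ≥ 3`, there is an invertible `P` with `[Ψ(E_{e_1}) * P] = [E_{e_1}]`. -/
theorem stmt_12 {n : ℕ} (hn : 3 ≤ n) {F : Type*} [Field F] [Fintype F]
    (Ψ : Matrix (Fin n) (Fin n) F → Matrix (Fin n) (Fin n) F)
    (hbij : Function.Bijective Ψ)
    (hedge : ∀ X Y : Matrix (Fin n) (Fin n) F,
      leftIdeal X ⊂ leftIdeal Y ↔ leftIdeal (Ψ X) ⊂ leftIdeal (Ψ Y)) :
    ∃ P : Matrix (Fin n) (Fin n) F, IsUnit P ∧
      leftIdeal (Ψ (Ee F (⟨0, by omega⟩ : Fin n)) * P) =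
        leftIdeal (Ee F (⟨0, by omega⟩ : Fin n)) :=
  stmt_12_general Ψ (fun X Y => (hedge X Y).1) _
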